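/- Let H : ℝⁿ → ℝ be twice continuously differentiable with gradient ∇H and Hessian ∇²H, and let A, A_d ∈ ℝ^{n×n}, A_e ∈ ℝ^{n×m}, 𝒢 ∈ ℝ^{m×n} be constant matrices, P ∈ ℝ^{n×n} symmetric, Q ∈ ℝ^{n×n} symmetric positive definite, Ω ∈ ℝ^{m×m} symmetric positive definite, σ ≥ 0, δ_M > 0. Let ξ : ℝ → ℝⁿ be continuously differentiable, e : ℝ → ℝᵐ, fix t ∈ ℝ and δ ∈ (0, δ_M], write ∇H_t := ∇H(ξ(t)), ∇H_d := ∇H(ξ(t−δ)), W := ∇²H(ξ(t)), e_d := e(t−δ), and suppose: (i) ξ̇(t) = A∇H_t + A_d∇H_d + A_e e_d, and (ii) e_dᵀΩe_d ≤ σ (𝒢∇H_d)ᵀΩ(𝒢∇H_d). Define V(s) := H(ξ(s)) + ∇H(ξ(s))ᵀP∇H(ξ(s)) + δ_M ∫_{−δ_M}^{0} ∫_{s+r}^{s} g(u)ᵀQg(u) du dr, where g(u) := d/du [∇H(ξ(u))]. Then V is differentiable at t and V̇(t) ≤ ψᵀΞψ, where ψ := (∇H_t, ∇H_d, (1/δ)∫_{t−δ}^{t}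 ∇H(ξ(s)) ds, e_d) ∈ ℝ^{3n+m} and Ξ is the symmetric block matrix with blocks Ξ₁₁ = ½(A+Aᵀ) + AᵀWᵀP + PWA + δ_M² AᵀWᵀQWA − 4Q, Ξ₂₁ = A_dᵀWᵀP + ½A_dᵀ + δ_M² A_dᵀWᵀQWA − 2Q, Ξ₂₂ = δ_M² A_dᵀWᵀQWA_d − 4Q + σ𝒢ᵀΩ𝒢, Ξ₃₁ = 6Q, Ξ₃₂ = 6Q, Ξ₃₃ = −12Q, Ξ₄₁ = A_eᵀWᵀP + ½A_eᵀ + δ_M² A_eᵀWᵀQWA, Ξ₄₂ = δ_M² A_eᵀWᵀQWA_d, Ξ₄₃ = 0, Ξ₄₄ = δ_M² A_eᵀWᵀQWA_e − Ω. -/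

import Mathlib

open Matrix intervalIntegral

/-!
Write `x(s) = ∇H(ξ(s))` and `g = ẋ`, so that `g(t) = W ξ̇(t)`. By the chain rule and the derivative of
the double integral,
`V̇(t) = x ⬝ ξ̇ + 2 g ⬝ P x + δM² g ⬝ Q g - δM ∫_{t-δM}^t g ⬝ Q g`.
As `Q` is positive definite and `δ ≤ δM`, the last integral term is at most `-δ ∫_{t-δ}^t g ⬝ Q g`,
and the Wirtinger-based inequality `wirtinger_integral_le` bounds this by
`-(y ⬝ Q y) - 3 (z ⬝ Q z)`, where `y = x(t) - x(t-δ)`, `z = x(t) + x(t-δ) - 2ν` and `ν` is the mean of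
`x` over `[t-δ, t]`. Adding the nonnegative quantity supplied by the event-triggering condition
gives exactly the quadratic form of `Ξ`, by `quadratic_form_eq`.
-/

theorem hasDerivAt_dotProduct {n : ℕ} {f g : ℝ → Fin n → ℝ} {f' g' : Fin n → ℝ} {s : ℝ}
    (hf : HasDerivAt f f' s) (hg : HasDerivAt g g' s) :
    HasDerivAt (fun u => f u ⬝ᵥ g u) (f' ⬝ᵥ g s + f s ⬝ᵥ g') s := by
  rw [hasDerivAt_pi] at hf hg
  simp only [dotProduct, ← Finset.sum_add_distrib]
  exact HasDerivAt.fun_sum fun i _ => (hf i).mul (hg i)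

theorem hasDerivAt_mulVec {n k : ℕ} (M : Matrix (Fin k) (Fin n) ℝ) {f : ℝ → Fin n → ℝ}
    {f' : Fin n → ℝ} {s : ℝ} (hf : HasDerivAt f f' s) :
    HasDerivAt (fun u => M *ᵥ f u) (M *ᵥ f') s :=
  (LinearMap.toContinuousLinearMap M.mulVecLin).hasFDerivAt.comp_hasDerivAt s hf

theorem dotProduct_mulVec_swap {n : ℕ} {Q : Matrix (Fin n) (Fin n) ℝ} (hQ : Q.IsSymm) (a b : Fin n → ℝ) :
    a ⬝ᵥ (Q *ᵥ b) = b ⬝ᵥ (Q *ᵥ a) := by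
  conv_lhs => rw [← hQ.eq, dotProduct_mulVec, vecMul_transpose, dotProduct_comm]

/-- Wirtinger-based integral inequality for a function `x` with derivative `g`. It integrates
`g ⬝ Q g ≥ 2 g ⬝ Q w - w ⬝ Q w`, where `w(s) = c + ℓ(s) d` is the `L²`-projection of `g` on affine
functions of time; the right-hand side then has an explicit antiderivative. -/
theorem wirtinger_integral_le {n : ℕ} {Q : Matrix (Fin n) (Fin n) ℝ} (hQ : Q.IsSymm)
    (hQ0 : ∀ v, 0 ≤ v ⬝ᵥ (Q *ᵥ v)) {x g : ℝ → Fin n → ℝ}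
    (hx : ∀ s, HasDerivAt x (g s) s) (hg : Continuous g) {a δ : ℝ} (hδ : 0 < δ)
    (ν : Fin n → ℝ) (hν : ν = (1 / δ) • ∫ s in (a - δ)..a, x s) :
    (x a - x (a - δ)) ⬝ᵥ (Q *ᵥ (x a - x (a - δ)))
      + 3 * ((x a + x (a - δ) - (2 : ℝ) • ν) ⬝ᵥ (Q *ᵥ (x a + x (a - δ) - (2 : ℝ) • ν)))
      ≤ δ * ∫ u in (a - δ)..a, g u ⬝ᵥ (Q *ᵥ g u) := by
  set y := x a - x (a - δ) with hy
  set z := x a + x (a - δ) - (2 : ℝ) • ν with hz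
  have hxc : Continuous x := continuous_iff_continuousAt.2 fun s => (hx s).continuousAt
  -- `c` and `d` are the coefficients of `g` along the orthogonal functions `1` and `ℓ`,
  -- whose squared norms on the interval are `δ` and `δ ^ 3 / 12`.
  set c := (1 / δ) • y with hc
  set d := (6 / δ ^ 2) • z with hd
  set ℓ : ℝ → ℝ := fun s => s - (a - δ / 2) with hℓ
  set X : ℝ → Fin n → ℝ := fun s => ∫ u in (a - δ)..s, x u with hX
  have hXd : ∀ s, HasDerivAt X (x s) s := fun s =>
    integral_hasDerivAt_right (hxc.intervalIntegrable _ _)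
      hxc.stronglyMeasurable.stronglyMeasurableAtFilter hxc.continuousAt
  have hℓd : ∀ s, HasDerivAt ℓ 1 s := fun s => (hasDerivAt_id s).sub_const _
  let F : ℝ → ℝ := fun s => 2 * (x s ⬝ᵥ (Q *ᵥ c)) + 2 * (ℓ s * (x s ⬝ᵥ (Q *ᵥ d)))
    - 2 * (X s ⬝ᵥ (Q *ᵥ d)) - s * (c ⬝ᵥ (Q *ᵥ c)) - ℓ s ^ 2 * (c ⬝ᵥ (Q *ᵥ d))
    - ℓ s ^ 3 / 3 * (d ⬝ᵥ (Q *ᵥ d))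
  let f : ℝ → ℝ := fun s => 2 * (g s ⬝ᵥ (Q *ᵥ (c + ℓ s • d)))
    - (c + ℓ s • d) ⬝ᵥ (Q *ᵥ (c + ℓ s • d))
  have dc : ∀ {u : ℝ → Fin n → ℝ} {u' s} (w : Fin n → ℝ), HasDerivAt u u' s →
      HasDerivAt (fun s => u s ⬝ᵥ w) (u' ⬝ᵥ w) s := fun w h => by
    simpa using hasDerivAt_dotProduct h (hasDerivAt_const _ w)
  have hF : ∀ s, HasDerivAt F (f s) s := by
    intro s
    have := ((((((dc (Q *ᵥ c) (hx s)).const_mul 2).add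
      (((hℓd s).mul (dc (Q *ᵥ d) (hx s))).const_mul 2)).sub
      ((dc (Q *ᵥ d) (hXd s)).const_mul 2)).sub
      ((hasDerivAt_id s).mul_const (c ⬝ᵥ (Q *ᵥ c)))).sub
      (((hℓd s).pow 2).mul_const (c ⬝ᵥ (Q *ᵥ d)))).sub
      ((((hℓd s).pow 3).div_const 3).mul_const (d ⬝ᵥ (Q *ᵥ d)))
    refine this.congr_deriv ?_
    simp only [f, mulVec_add, mulVec_smul, dotProduct_add, add_dotProduct, smul_dotProduct,
      dotProduct_smul, smul_eq_mul]
    rw [dotProduct_mulVec_swap hQ d c]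
    push_cast
    ring
  have hcℓ : Continuous ℓ := by fun_prop
  have hgQ : Continuous fun s => g s ⬝ᵥ (Q *ᵥ g s) := 
    hg.dotProduct (continuous_const.matrix_mulVec hg)
  have hcl : Continuous fun s => c + ℓ s • d := by fun_prop
  have hf : Continuous f := (continuous_const.mul
    (hg.dotProduct (continuous_const.matrix_mulVec hcl))).sub
    (hcl.dotProduct (continuous_const.matrix_mulVec hcl))
  have h1 : ∫ s in (a - δ)..a, f s = F a - F (a - δ) :=
    integral_eq_sub_of_hasDerivAt (fun s _ => hF s) (hf.intervalIntegrable _ _)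
  have h2 : ∫ s in (a - δ)..a, f s ≤ ∫ u in (a - δ)..a, g u ⬝ᵥ (Q *ᵥ g u) := by
    refine integral_mono_on (by linarith) (hf.intervalIntegrable _ _)
      (hgQ.intervalIntegrable _ _) fun s _ => ?_
    have := hQ0 (g s - (c + ℓ s • d))
    simp only [f]
    generalize c + ℓ s • d = w at *
    rw [mulVec_sub, dotProduct_sub, sub_dotProduct, sub_dotProduct, dotProduct_mulVec_swap hQ w] at this
    linarith
  rw [h1] at h2
  have hXa : X a = δ • ν := by
    rw [hν, smul_smul, mul_one_div_cancel hδ.ne', one_smul]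
  have hX0 : X (a - δ) = 0 := integral_same
  have hFF : δ * (F a - F (a - δ)) = y ⬝ᵥ (Q *ᵥ y) + 3 * (z ⬝ᵥ (Q *ᵥ z)) := by
    have e1 : F a - F (a - δ) = 2 * (y ⬝ᵥ (Q *ᵥ c)) + δ * (z ⬝ᵥ (Q *ᵥ d))
        - δ * (c ⬝ᵥ (Q *ᵥ c)) - δ ^ 3 / 12 * (d ⬝ᵥ (Q *ᵥ d)) := by
      simp only [F, hXa, hX0, hy, hz, hℓ, sub_dotProduct, add_dotProduct, smul_dotProduct,
        zero_dotProduct, smul_eq_mul]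
      ring
    rw [e1]
    simp only [hc, hd, mulVec_smul, dotProduct_smul, smul_dotProduct, smul_eq_mul]
    field_simp
    ring
  rw [← hFF]
  exact mul_le_mul_of_nonneg_left h2 hδ.le

/-- With `Φ` a primitive of `q`, the double integral is `M Φ(s) - ∫_{s-M}^s Φ`, which is
differentiated by the fundamental theorem of calculus. -/
theorem hasDerivAt_double_integral {q : ℝ → ℝ} (hq : Continuous q) (M t : ℝ) :
    HasDerivAt (fun s => ∫ r in (-M)..(0:ℝ), ∫ u in (s + r)..s, q u)
      (M * q t - ∫ u in (t - M)..t, q u) t := by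
  set Φ : ℝ → ℝ := fun s => ∫ u in (0:ℝ)..s, q u with hΦ
  have hd : ∀ {p : ℝ → ℝ}, Continuous p → ∀ s,
      HasDerivAt (fun s => ∫ u in (0:ℝ)..s, p u) (p s) s := fun hp s =>
    integral_hasDerivAt_right (hp.intervalIntegrable _ _)
      hp.stronglyMeasurable.stronglyMeasurableAtFilter hp.continuousAt
  have hΦc : Continuous Φ := continuous_iff_continuousAt.2 fun s => (hd hq s).continuousAt
  have hi : ∀ a b, ∫ u in a..b, q u = Φ b - Φ a := fun a b =>
    (integral_interval_sub_left (hq.intervalIntegrable _ _) (hq.intervalIntegrable _ _)).symm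
  have hj : ∀ a b, ∫ u in a..b, Φ u = (∫ u in (0:ℝ)..b, Φ u) - ∫ u in (0:ℝ)..a, Φ u := fun a b =>
    (integral_interval_sub_left (hΦc.intervalIntegrable _ _) (hΦc.intervalIntegrable _ _)).symm
  have e : (fun s => ∫ r in (-M)..(0:ℝ), ∫ u in (s + r)..s, q u) =
      fun s => M * Φ s - ((∫ u in (0:ℝ)..s, Φ u) - ∫ u in (0:ℝ)..(s - M), Φ u) := by
    funext s
    simp only [hi]
    have hs : Continuous fun r => Φ (s + r) := hΦc.comp (by fun_prop)
    rw [integral_sub (continuous_const.intervalIntegrable _ _) (hs.intervalIntegrable _ _),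
      integral_comp_add_left (fun u => Φ u), hj]
    simp [sub_eq_add_neg]
  rw [e, hi]
  exact ((hd hq t).const_mul M).sub ((hd hΦc t).sub ((hd hΦc (t - M)).comp_sub_const t M))

/-- The quadratic form of `Ξ` regrouped into the terms that arise in `V̇(t)`: `f` stands for `ξ̇(t)`, so that `W f` is
the derivative of `∇H(ξ)`, and `x`, `y`, `v`, `e` are the four components of `ψ`. -/
theorem quadratic_form_eq (n m : ℕ) (A Ad : Matrix (Fin n) (Fin n) ℝ) (Ae : Matrix (Fin n) (Fin m) ℝ)
    (G : Matrix (Fin m) (Fin n) ℝ)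
    (P : Matrix (Fin n) (Fin n) ℝ) (hP : P.IsSymm)
    (Q : Matrix (Fin n) (Fin n) ℝ) (hQ : Q.IsSymm) 
    (Ω : Matrix (Fin m) (Fin m) ℝ) (W : Matrix (Fin n) (Fin n) ℝ) (σ δM : ℝ) 
    (x y v : Fin n → ℝ) (e : Fin m → ℝ) :
    let ψ : ((Fin n ⊕ Fin n) ⊕ (Fin n ⊕ Fin m)) → ℝ :=
      Sum.elim (Sum.elim x y) (Sum.elim v e)
    let Ξ11 : Matrix (Fin n) (Fin n) ℝ :=
      (1/2 : ℝ) • (A + Aᵀ) + Aᵀ * Wᵀ * P + P * W * A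
        + (δM ^ 2) • (Aᵀ * Wᵀ * Q * W * A) - (4 : ℝ) • Q
    let Ξ21 : Matrix (Fin n) (Fin n) ℝ :=
      Adᵀ * Wᵀ * P + (1/2 : ℝ) • Adᵀ + (δM ^ 2) • (Adᵀ * Wᵀ * Q * W * A) - (2 : ℝ) • Q
    let Ξ22 : Matrix (Fin n) (Fin n) ℝ :=
      (δM ^ 2) • (Adᵀ * Wᵀ * Q * W * Ad) - (4 : ℝ) • Q + σ • (Gᵀ * Ω * G)
    let Ξ31 : Matrix (Fin n) (Fin n) ℝ := (6 : ℝ) • Q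
    let Ξ32 : Matrix (Fin n) (Fin n) ℝ := (6 : ℝ) • Q
    let Ξ33 : Matrix (Fin n) (Fin n) ℝ := (-12 : ℝ) • Q
    let Ξ41 : Matrix (Fin m) (Fin n) ℝ :=
      Aeᵀ * Wᵀ * P + (1/2 : ℝ) • Aeᵀ + (δM ^ 2) • (Aeᵀ * Wᵀ * Q * W * A)
    let Ξ42 : Matrix (Fin m) (Fin n) ℝ := (δM ^ 2) • (Aeᵀ * Wᵀ * Q * W * Ad)
    let Ξ43 : Matrix (Fin m) (Fin n) ℝ := 0
    let Ξ44 : Matrix (Fin m) (Fin m) ℝ := (δM ^ 2) • (Aeᵀ * Wᵀ * Q * W * Ae) - Ω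
    let Ξ : Matrix ((Fin n ⊕ Fin n) ⊕ (Fin n ⊕ Fin m))
        ((Fin n ⊕ Fin n) ⊕ (Fin n ⊕ Fin m)) ℝ :=
      Matrix.fromBlocks
        (Matrix.fromBlocks Ξ11 Ξ21ᵀ Ξ21 Ξ22)
        (Matrix.fromBlocks Ξ31ᵀ Ξ41ᵀ Ξ32ᵀ Ξ42ᵀ)
        (Matrix.fromBlocks Ξ31 Ξ32 Ξ41 Ξ42)
        (Matrix.fromBlocks Ξ33 Ξ43ᵀ Ξ43 Ξ44)
    let f := A *ᵥ x + Ad *ᵥ y + Ae *ᵥ e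
    ψ ⬝ᵥ (Ξ *ᵥ ψ) = x ⬝ᵥ f + 2 * ((W *ᵥ f) ⬝ᵥ (P *ᵥ x))
      + δM ^ 2 * ((W *ᵥ f) ⬝ᵥ (Q *ᵥ (W *ᵥ f)))
      - (x - y) ⬝ᵥ (Q *ᵥ (x - y))
      - 3 * ((x + y - (2 : ℝ) • v) ⬝ᵥ (Q *ᵥ (x + y - (2 : ℝ) • v)))
      + (σ * ((G *ᵥ y) ⬝ᵥ (Ω *ᵥ (G *ᵥ y))) - e ⬝ᵥ (Ω *ᵥ e)) := by
  intro ψ Ξ11 Ξ21 Ξ22 Ξ31 Ξ32 Ξ33 Ξ41 Ξ42 Ξ43 Ξ44 Ξ f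
  have tr : ∀ {k l : ℕ} (M : Matrix (Fin k) (Fin l) ℝ) a b,
      a ⬝ᵥ (Mᵀ *ᵥ b) = (M *ᵥ a) ⬝ᵥ b := fun M a b => by
    rw [dotProduct_mulVec, vecMul_transpose]
  have qs := dotProduct_mulVec_swap hQ
  have ps := dotProduct_mulVec_swap hP
  -- Move every transposed factor to the left of its dot product; what remains is the symmetry of
  -- `P` and `Q` and scalar algebra.
  simp only [ψ, Ξ, Ξ11, Ξ21, Ξ22, Ξ31, Ξ32, Ξ33, Ξ41, Ξ42, Ξ43, Ξ44, f, fromBlocks_mulVec,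
    Sum.elim_comp_inl, Sum.elim_comp_inr, sumElim_dotProduct_sumElim,
    transpose_add, transpose_sub, transpose_smul, transpose_mul, transpose_transpose,
    hP.eq, hQ.eq, transpose_zero, zero_mulVec, add_mulVec, sub_mulVec, smul_mulVec, ← mulVec_mulVec,
    mulVec_add, mulVec_sub, mulVec_smul, dotProduct_add, add_dotProduct, dotProduct_sub, sub_dotProduct,
    smul_dotProduct, dotProduct_smul, tr, smul_eq_mul, dotProduct_zero, Matrix.mul_assoc]
  rw [dotProduct_comm (A *ᵥ x) x, dotProduct_comm (Ad *ᵥ y) x, dotProduct_comm (Ae *ᵥ e) x,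
    ps x, ps x, ps x, qs y x, qs v x, qs v y,
    qs (W *ᵥ Ad *ᵥ y) (W *ᵥ A *ᵥ x), qs (W *ᵥ Ae *ᵥ e) (W *ᵥ A *ᵥ x),
    qs (W *ᵥ Ae *ᵥ e) (W *ᵥ Ad *ᵥ y)]
  ring

/-- Central estimate in the proof of Theorem 1: along the interconnected time-delayed
port-Hamiltonian dynamics, under the event-triggering bound, the derivative of the
Lyapunov–Krasovskii functional satisfies `V̇(t) ≤ ψᵀ Ξ ψ`. -/
theorem LK_derivative_bound
    (n m : ℕ)
    (H : (Fin n → ℝ) → ℝ)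
    (gradH : (Fin n → ℝ) → (Fin n → ℝ))
    (hessH : (Fin n → ℝ) → Matrix (Fin n) (Fin n) ℝ)
    (hH : ContDiff ℝ 2 H)
    (hgrad : ∀ v w, fderiv ℝ H v w = gradH v ⬝ᵥ w)
    (hhess : ∀ v, HasFDerivAt gradH
      (LinearMap.toContinuousLinearMap ((hessH v).mulVecLin)) v)
    (A Ad : Matrix (Fin n) (Fin n) ℝ) (Ae : Matrix (Fin n) (Fin m) ℝ)
    (G : Matrix (Fin m) (Fin n) ℝ)
    (P : Matrix (Fin n) (Fin n) ℝ) (hP : P.IsSymm)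
    (Q : Matrix (Fin n) (Fin n) ℝ) (hQsymm : Q.IsSymm) (hQ : Q.PosDef)
    (Ω : Matrix (Fin m) (Fin m) ℝ) (hΩsymm : Ω.IsSymm) (hΩ : Ω.PosDef)
    (σ δM : ℝ) (hσ : 0 ≤ σ) (hδM : 0 < δM)
    (ξ : ℝ → Fin n → ℝ) (hξ : ContDiff ℝ 1 ξ)
    (e : ℝ → Fin m → ℝ)
    (t δ : ℝ) (hδ : 0 < δ) (hδδM : δ ≤ δM)
    (hdyn : HasDerivAt ξ
      (A *ᵥ gradH (ξ t) + Ad *ᵥ gradH (ξ (t - δ)) + Ae *ᵥ e (t - δ)) t)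
    (hetm : e (t - δ) ⬝ᵥ (Ω *ᵥ e (t - δ)) ≤
      σ * ((G *ᵥ gradH (ξ (t - δ))) ⬝ᵥ (Ω *ᵥ (G *ᵥ gradH (ξ (t - δ)))))) :
    -- abbreviations
    let W : Matrix (Fin n) (Fin n) ℝ := hessH (ξ t)
    let V : ℝ → ℝ := fun s =>
      H (ξ s) + gradH (ξ s) ⬝ᵥ (P *ᵥ gradH (ξ s))
        + δM * ∫ r in (-δM)..(0:ℝ), (∫ u in (s + r)..s,
            (deriv (fun τ => gradH (ξ τ)) u) ⬝ᵥ (Q *ᵥ deriv (fun τ => gradH (ξ τ)) u))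
    let ψ : ((Fin n ⊕ Fin n) ⊕ (Fin n ⊕ Fin m)) → ℝ :=
      Sum.elim (Sum.elim (gradH (ξ t)) (gradH (ξ (t - δ))))
        (Sum.elim ((1 / δ) • ∫ s in (t - δ)..t, gradH (ξ s)) (e (t - δ)))
    let Ξ11 : Matrix (Fin n) (Fin n) ℝ :=
      (1/2 : ℝ) • (A + Aᵀ) + Aᵀ * Wᵀ * P + P * W * A
        + (δM ^ 2) • (Aᵀ * Wᵀ * Q * W * A) - (4 : ℝ) • Q
    let Ξ21 : Matrix (Fin n) (Fin n) ℝ :=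
      Adᵀ * Wᵀ * P + (1/2 : ℝ) • Adᵀ + (δM ^ 2) • (Adᵀ * Wᵀ * Q * W * A) - (2 : ℝ) • Q
    let Ξ22 : Matrix (Fin n) (Fin n) ℝ :=
      (δM ^ 2) • (Adᵀ * Wᵀ * Q * W * Ad) - (4 : ℝ) • Q + σ • (Gᵀ * Ω * G)
    let Ξ31 : Matrix (Fin n) (Fin n) ℝ := (6 : ℝ) • Q
    let Ξ32 : Matrix (Fin n) (Fin n) ℝ := (6 : ℝ) • Q
    let Ξ33 : Matrix (Fin n) (Fin n) ℝ := (-12 : ℝ) • Q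
    let Ξ41 : Matrix (Fin m) (Fin n) ℝ :=
      Aeᵀ * Wᵀ * P + (1/2 : ℝ) • Aeᵀ + (δM ^ 2) • (Aeᵀ * Wᵀ * Q * W * A)
    let Ξ42 : Matrix (Fin m) (Fin n) ℝ := (δM ^ 2) • (Aeᵀ * Wᵀ * Q * W * Ad)
    let Ξ43 : Matrix (Fin m) (Fin n) ℝ := 0
    let Ξ44 : Matrix (Fin m) (Fin m) ℝ := (δM ^ 2) • (Aeᵀ * Wᵀ * Q * W * Ae) - Ω
    let Ξ : Matrix ((Fin n ⊕ Fin n) ⊕ (Fin n ⊕ Fin m))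
        ((Fin n ⊕ Fin n) ⊕ (Fin n ⊕ Fin m)) ℝ :=
      Matrix.fromBlocks
        (Matrix.fromBlocks Ξ11 Ξ21ᵀ Ξ21 Ξ22)
        (Matrix.fromBlocks Ξ31ᵀ Ξ41ᵀ Ξ32ᵀ Ξ42ᵀ)
        (Matrix.fromBlocks Ξ31 Ξ32 Ξ41 Ξ42)
        (Matrix.fromBlocks Ξ33 Ξ43ᵀ Ξ43 Ξ44)
    DifferentiableAt ℝ V t ∧ deriv V t ≤ ψ ⬝ᵥ (Ξ *ᵥ ψ) := by
  intro W V ψ Ξ11 Ξ21 Ξ22 Ξ31 Ξ32 Ξ33 Ξ41 Ξ42 Ξ43 Ξ44 Ξ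
  set x : ℝ → Fin n → ℝ := fun τ => gradH (ξ τ) with hx
  set g : ℝ → Fin n → ℝ := deriv x with hg
  set f := A *ᵥ gradH (ξ t) + Ad *ᵥ gradH (ξ (t - δ)) + Ae *ᵥ e (t - δ) with hf
  have hgradC : ContDiff ℝ 1 gradH := by
    rw [contDiff_pi]
    intro i
    have h1 : (fun v => gradH v i) = fun v => fderiv ℝ H v (Pi.single i 1) := by
      funext v
      rw [hgrad, dotProduct_single_one]
    rw [h1]
    exact (hH.fderiv_right (m := 1) (by norm_num)).clm_apply contDiff_const
  have hxC : ContDiff ℝ 1 x := hgradC.comp hξ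
  have hxd : ∀ s, HasDerivAt x (g s) s := fun s =>
    (hxC.differentiable one_ne_zero s).hasDerivAt
  have hgc : Continuous g := hxC.continuous_deriv le_rfl
  have hgt : g t = W *ᵥ f := ((hhess (ξ t)).comp_hasDerivAt t hdyn).deriv
  set q : ℝ → ℝ := fun u => g u ⬝ᵥ (Q *ᵥ g u) with hq
  have hqc : Continuous q := hgc.dotProduct (continuous_const.matrix_mulVec hgc)
  have hQ0 : ∀ v, 0 ≤ v ⬝ᵥ (Q *ᵥ v) := fun v => by
    simpa using hQ.posSemidef.dotProduct_mulVec_nonneg v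
  have hHξ : HasDerivAt (fun s => H (ξ s)) (x t ⬝ᵥ f) t := by
    rw [← hgrad]
    exact ((hH.differentiable two_ne_zero (ξ t)).hasFDerivAt).comp_hasDerivAt t hdyn
  have hV : HasDerivAt V (x t ⬝ᵥ f + (g t ⬝ᵥ (P *ᵥ x t) + x t ⬝ᵥ (P *ᵥ g t))
      + δM * (δM * q t - ∫ u in (t - δM)..t, q u)) t :=
    (hHξ.add (hasDerivAt_dotProduct (hxd t) (hasDerivAt_mulVec P (hxd t)))).add
      ((hasDerivAt_double_integral hqc δM t).const_mul δM)
  refine ⟨hV.differentiableAt, ?_⟩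
  rw [hV.deriv]
  have hmono : ∫ u in (t - δ)..t, q u ≤ ∫ u in (t - δM)..t, q u :=
    integral_mono_interval (by linarith) (by linarith) le_rfl
      (Filter.Eventually.of_forall fun u => hQ0 (g u)) (hqc.intervalIntegrable _ _)
  have hnn : 0 ≤ ∫ u in (t - δ)..t, q u :=
    integral_nonneg (by linarith) fun u _ => hQ0 (g u)
  have hint : δ * ∫ u in (t - δ)..t, q u ≤ δM * ∫ u in (t - δM)..t, q u :=
    mul_le_mul hδδM hmono hnn hδM.le
  have hW := wirtinger_integral_le hQsymm hQ0 hxd hgc (a := t) hδ _ rfl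
  have hquad := quadratic_form_eq n m A Ad Ae G P hP Q hQsymm Ω W σ δM (x t) (x (t - δ))
    ((1 / δ) • ∫ s in (t - δ)..t, x s) (e (t - δ))
  refine le_trans ?_ hquad.ge
  have hqt : q t = (W *ᵥ f) ⬝ᵥ (Q *ᵥ (W *ᵥ f)) := by rw [← hgt]
  rw [dotProduct_mulVec_swap hP (x t) (g t), hqt, hgt]
  change _ ≤ x t ⬝ᵥ f + 2 * ((W *ᵥ f) ⬝ᵥ (P *ᵥ x t))
      + δM ^ 2 * ((W *ᵥ f) ⬝ᵥ (Q *ᵥ (W *ᵥ f))) - _ - _ + _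
  linarith
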